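/- arXiv:1609.07531 — 2 statements merged into one kernel-verified Lean document; each statement's English description precedes it below -/
import Mathlib

section
/- Consider the hospitals/residents instance G = (R∪H, E) with residents R = {r, r'}, hospitals H = {h, h'}, capacities cap(r) = cap(r') = cap(h) = 1 and cap(h') = 2, edge set E = R×H, and preferences r: h ≻ h'; r': h ≻ h'; h: r ≻ r'; h': r ≻ r'. Then M = {(r,h), (r',h')} and M' = {(r,h'), (r',h)} are both popular matchings of maximum size among popular matchings of G, the hospital h' is not matched to full capacity in either, M(h') ≠ M'(h'), and M' is not pairwise-stable (the edge (r,h) blocks M'). Hence the rural hospitals theorem fails for maximum-size popular matchings. -/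
/-!
Many-to-many matchings with two-sided preferences, votes, and popularity,
following "Popular Matchings in the Many-to-Many Setting".
-/

/-- The vote of a vertex with rank function `r` (smaller rank = more preferred)
comparing two options, where `none` stands for `null` (ranked below everything). -/
def vote {β : Type*} [DecidableEq β] (r : β → ℕ) : Option β → Option β → ℤ
  | none, none => 0
  | some _, none => 1
  | none, some _ => -1
  | some x, some y => if x = y then 0 else if r x < r y then 1 else -1

/-- The common length `k` of the arrays compared in `δ_u(S₀,S₁)`:
after padding the smaller of `S₀, S₁` with nulls and removing common elements. -/
def kOf {β : Type*} [DecidableEq β] (S₀ S₁ : Finset β) : ℕ :=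
  max S₀.card S₁.card - (S₀ ∩ S₁).card

/-- `S₀ ∖ S₁`, viewed as an array of `Option`s padded with `none` (null) to length `k`. -/
noncomputable def padded {β : Type*} [DecidableEq β] (S₀ S₁ : Finset β) (k : ℕ) : List (Option β) :=
  ((S₀ \ S₁).toList.map some) ++ List.replicate (k - (S₀ \ S₁).card) none

/-- `δ_u(S₀,S₁)`: the minimum, over all permutations `σ` of `{1,…,k}`, of
`Σ_i vote_u(S'₀[i], S'₁[σ(i)])`. -/
noncomputable def deltaSet {β : Type*} [DecidableEq β] (r : β → ℕ) (S₀ S₁ : Finset β) : ℤ :=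
  Finset.univ.inf' ⟨1, Finset.mem_univ 1⟩ fun σ : Equiv.Perm (Fin (kOf S₀ S₁)) =>
    ∑ i : Fin (kOf S₀ S₁),
      vote r ((padded S₀ S₁ (kOf S₀ S₁)).getD (i : ℕ) none)
             ((padded S₁ S₀ (kOf S₀ S₁)).getD (σ i : ℕ) none)

/-- A bipartite instance `G = (A ∪ B, E)` with capacities `≥ 1` and strict
preferences of every vertex over its neighbors (given by injective-on-neighbors
rank functions; smaller rank = more preferred). -/
structure PrefInstance (α β : Type*) [Fintype α] [Fintype β] [DecidableEq α] [DecidableEq β] where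
  E : Finset (α × β)
  capA : α → ℕ
  capB : β → ℕ
  rankA : α → β → ℕ
  rankB : β → α → ℕ
  capA_pos : ∀ a, 1 ≤ capA a
  capB_pos : ∀ b, 1 ≤ capB b
  rankA_injOn : ∀ a, Set.InjOn (rankA a) {b | (a, b) ∈ E}
  rankB_injOn : ∀ b, Set.InjOn (rankB b) {a | (a, b) ∈ E}

namespace PrefInstance

variable {α β : Type*} [Fintype α] [Fintype β] [DecidableEq α] [DecidableEq β]

/-- `M(a)`: the set of `B`-vertices matched to `a` in `M`. -/
def rowSet (M : Finset (α × β)) (a : α) : Finset β :=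
  Finset.univ.filter fun b => (a, b) ∈ M

/-- `M(b)`: the set of `A`-vertices matched to `b` in `M`. -/
def colSet (M : Finset (α × β)) (b : β) : Finset α :=
  Finset.univ.filter fun a => (a, b) ∈ M

variable (I : PrefInstance α β)

/-- `M` is a matching in `G`: a subset of `E` respecting all capacities. -/
def IsMatching (M : Finset (α × β)) : Prop :=
  M ⊆ I.E ∧ (∀ a, (rowSet M a).card ≤ I.capA a) ∧ (∀ b, (colSet M b).card ≤ I.capB b)

/-- `Δ_a(M₀,M₁) = δ_a(M₀(a), M₁(a))` for `a ∈ A`. -/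
noncomputable def DeltaA (M₀ M₁ : Finset (α × β)) (a : α) : ℤ :=
  deltaSet (I.rankA a) (rowSet M₀ a) (rowSet M₁ a)

/-- `Δ_b(M₀,M₁) = δ_b(M₀(b), M₁(b))` for `b ∈ B`. -/
noncomputable def DeltaB (M₀ M₁ : Finset (α × β)) (b : β) : ℤ :=
  deltaSet (I.rankB b) (colSet M₀ b) (colSet M₁ b)

/-- `Δ(M₀,M₁) = Σ_{u ∈ A∪B} Δ_u(M₀,M₁)`. -/
noncomputable def Delta (M₀ M₁ : Finset (α × β)) : ℤ :=
  (∑ a, I.DeltaA M₀ M₁ a) + ∑ b, I.DeltaB M₀ M₁ b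

/-- `M` is a popular matching: `Δ(M,T) ≥ 0` against every matching `T`. -/
def Popular (M : Finset (α × β)) : Prop :=
  I.IsMatching M ∧ ∀ T, I.IsMatching T → 0 ≤ I.Delta M T

/-- `M` is a weakly popular matching: `Δ(T,M) ≤ 0` for every matching `T`. -/
def WeaklyPopular (M : Finset (α × β)) : Prop :=
  I.IsMatching M ∧ ∀ T, I.IsMatching T → I.Delta T M ≤ 0

/-- The edge `(a,b) ∈ E ∖ M` blocks `M`. -/
def Blocks (M : Finset (α × β)) (a : α) (b : β) : Prop :=
  (a, b) ∈ I.E ∧ (a, b) ∉ M ∧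
  ((rowSet M a).card < I.capA a ∨ ∃ b' ∈ rowSet M a, I.rankA a b < I.rankA a b') ∧
  ((colSet M b).card < I.capB b ∨ ∃ a' ∈ colSet M b, I.rankB b a < I.rankB b a')

/-- `M` is a pairwise-stable matching: no edge blocks it. -/
def Stable (M : Finset (α × β)) : Prop :=
  I.IsMatching M ∧ ∀ a b, ¬ I.Blocks M a b

end PrefInstance
/-- The hospitals/residents instance with residents `R = {r, r'} = Fin 2`
(`r ↦ 0`, `r' ↦ 1`), hospitals `H = {h, h'} = Fin 2` (`h ↦ 0`, `h' ↦ 1`),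
capacities `cap(r) = cap(r') = cap(h) = 1`, `cap(h') = 2`, all pairs acceptable,
and preferences `r : h ≻ h'`, `r' : h ≻ h'`, `h : r ≻ r'`, `h' : r ≻ r'`. -/
def ruralInstance : PrefInstance (Fin 2) (Fin 2) where
  E := Finset.univ
  capA := fun _ => 1
  capB := fun b => if b = 0 then 1 else 2
  rankA := fun _ b => b.val
  rankB := fun _ a => a.val
  capA_pos := fun _ => le_refl 1
  capB_pos := by decide
  rankA_injOn := fun _ => fun x _ y _ h => Fin.val_injective h
  rankB_injOn := fun _ => fun x _ y _ h => Fin.val_injective h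

/-!
However its partners are paired up, a vertex casts at most one vote per exchanged partner against
the old matching; and it casts exactly one per exchanged partner in favour of it if it receives no
more partners than it gives up, all of them worse.

In `{(r,h), (r',h')}`, the vertices `r` and `h` have their favourite partner, `h'` prefers no set
without `r`, and `r'` prefers none without `h`. So whoever improves does so along one of the edges
`(r,h')`, `(r',h)`, and the other end of that edge votes against the change.

In `{(r,h'), (r',h)}`, the edge `(r,h)` makes both of its ends better off, but then `r'` and `h'`
lose their favourite partners. Without that edge only `h'` can improve, by adding `r'`, who then
loses `h`.

Both matchings saturate the residents, so no matching is larger.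
-/

section Vote

variable {β : Type*} [DecidableEq β]

theorem neg_one_le_vote (r : β → ℕ) (o₀ o₁ : Option β) : -1 ≤ vote r o₀ o₁ := by
  rcases o₀ with _ | x <;> rcases o₁ with _ | y <;> simp only [vote] <;> (try split_ifs) <;>
    norm_num

theorem vote_eq_one {r : β → ℕ} {o₀ o₁ : Option β} (hsome : o₀.isSome)
    (hlt : ∀ x ∈ o₀, ∀ y ∈ o₁, r x < r y) : vote r o₀ o₁ = 1 := by
  obtain ⟨x, rfl⟩ := Option.isSome_iff_exists.mp hsome
  rcases o₁ with _ | y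
  · rfl
  · have hxy : r x < r y := hlt x rfl y rfl
    have hne : x ≠ y := fun h => hxy.ne (congrArg r h)
    simp only [vote, if_neg hne, if_pos hxy]

end Vote

section DeltaSet

variable {β : Type*} [DecidableEq β] {S₀ S₁ : Finset β}

theorem kOf_eq_max_card_sdiff (S₀ S₁ : Finset β) :
    kOf S₀ S₁ = max (S₀ \ S₁).card (S₁ \ S₀).card := by
  have h₀ := Finset.card_sdiff_add_card_inter S₀ S₁
  have h₁ := Finset.card_sdiff_add_card_inter S₁ S₀
  rw [Finset.inter_comm] at h₁
  unfold kOf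
  omega

theorem mem_sdiff_of_mem_getD_padded {k i : ℕ} {x : β}
    (hx : x ∈ (padded S₀ S₁ k).getD i none) : x ∈ S₀ \ S₁ := by
  have hmem : some x ∈ padded S₀ S₁ k := by
    rw [Option.mem_def, List.getD_eq_getElem?_getD, Option.getD_eq_iff] at hx
    exact List.mem_of_getElem? (hx.resolve_right (by simp))
  simpa [padded] using hmem

theorem isSome_getD_padded {k i : ℕ} (hi : i < (S₀ \ S₁).card) :
    ((padded S₀ S₁ k).getD i none).isSome := by
  have hlen : i < ((S₀ \ S₁).toList.map some).length := by simpa using hi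
  rw [padded, List.getD_append _ _ _ _ hlen, List.getD_eq_getElem _ _ hlen, List.getElem_map]
  rfl

theorem neg_kOf_le_deltaSet (r : β → ℕ) (S₀ S₁ : Finset β) :
    -(kOf S₀ S₁ : ℤ) ≤ deltaSet r S₀ S₁ := by
  refine Finset.le_inf' _ _ fun σ _ => ?_
  calc -(kOf S₀ S₁ : ℤ) = ∑ _i : Fin (kOf S₀ S₁), (-1 : ℤ) := by simp
    _ ≤ _ := Finset.sum_le_sum fun i _ => neg_one_le_vote r _ _

theorem kOf_le_deltaSet {r : β → ℕ} (hcard : (S₁ \ S₀).card ≤ (S₀ \ S₁).card)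
    (hlt : ∀ x ∈ S₀ \ S₁, ∀ y ∈ S₁ \ S₀, r x < r y) :
    (kOf S₀ S₁ : ℤ) ≤ deltaSet r S₀ S₁ := by
  have hk : kOf S₀ S₁ = (S₀ \ S₁).card := by rw [kOf_eq_max_card_sdiff, max_eq_left hcard]
  refine Finset.le_inf' _ _ fun σ _ => ?_
  calc (kOf S₀ S₁ : ℤ) = ∑ _i : Fin (kOf S₀ S₁), (1 : ℤ) := by simp
    _ ≤ _ := Finset.sum_le_sum fun i _ => (vote_eq_one (isSome_getD_padded (hk ▸ i.isLt))
      fun x hx y hy => hlt x (mem_sdiff_of_mem_getD_padded hx) y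
        (mem_sdiff_of_mem_getD_padded hy)).ge

theorem deltaSet_nonneg_of_subset (r : β → ℕ) (h : S₁ ⊆ S₀) : 0 ≤ deltaSet r S₀ S₁ := by
  have hempty : S₁ \ S₀ = ∅ := Finset.sdiff_eq_empty_iff_subset.mpr h
  exact (Int.natCast_nonneg _).trans (kOf_le_deltaSet (by simp [hempty]) (by simp [hempty]))

end DeltaSet

section Pair

variable {β : Type*} [DecidableEq β] {x y : β} {S : Finset β}

theorem sdiff_singleton_subset_singleton (hS : S ⊆ {x, y}) : S \ {x} ⊆ {y} := by
  rwa [Finset.sdiff_singleton_eq_erase, ← Finset.subset_insert_iff]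

theorem neg_one_le_deltaSet_singleton (r : β → ℕ) (hS : S ⊆ {x, y}) :
    -1 ≤ deltaSet r {x} S := by
  have hlost : ({x} \ S).card ≤ 1 := Finset.card_le_card Finset.sdiff_subset
  have hgained : (S \ {x}).card ≤ 1 := Finset.card_le_card (sdiff_singleton_subset_singleton hS)
  have hk : kOf {x} S ≤ 1 := kOf_eq_max_card_sdiff {x} S ▸ max_le hlost hgained
  linarith [neg_kOf_le_deltaSet r {x} S, (Nat.cast_le (α := ℤ)).mpr hk]

theorem one_le_deltaSet_singleton {r : β → ℕ} (hxy : r x < r y) (hS : S ⊆ {x, y})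
    (hx : x ∉ S) : 1 ≤ deltaSet r {x} S := by
  have hlost : {x} \ S = {x} := Finset.sdiff_eq_self_of_disjoint (by simpa using hx)
  have hgained : S \ {x} ⊆ {y} := sdiff_singleton_subset_singleton hS
  have hk : 1 ≤ kOf {x} S := by
    rw [kOf_eq_max_card_sdiff, hlost, Finset.card_singleton]
    exact le_max_left _ _
  refine (Nat.cast_le (α := ℤ).mpr hk).trans (kOf_le_deltaSet ?_ ?_)
  · rw [hlost]
    exact Finset.card_le_card (t := {y}) hgained
  · intro x' hx' y' hy'
    rw [hlost, Finset.mem_singleton] at hx'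
    rwa [hx', Finset.mem_singleton.mp (hgained hy')]

theorem deltaSet_singleton_nonneg (r : β → ℕ) (hS : S ⊆ {x, y}) (hy : y ∉ S) :
    0 ≤ deltaSet r {x} S := by
  refine deltaSet_nonneg_of_subset r fun z hz => ?_
  have hzy : z ≠ y := fun h => hy (h ▸ hz)
  simpa [hzy] using hS hz

/-- If the second vertex improves, it does so with the help of `y'`, and this is paid for by the
first one, which is then deprived of its favourite `x`. -/
theorem deltaSet_singleton_add_nonneg {γ : Type*} [DecidableEq γ] {x' y' : γ} {S' : Finset γ}
    {r : β → ℕ} (hxy : r x < r y) (r' : γ → ℕ) (hS : S ⊆ {x, y}) (hS' : S' ⊆ {x', y'})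
    (h : x ∈ S → y ∉ S ∧ y' ∉ S') : 0 ≤ deltaSet r {x} S + deltaSet r' {x'} S' := by
  by_cases hx : x ∈ S
  · obtain ⟨hy, hy'⟩ := h hx
    exact add_nonneg (deltaSet_singleton_nonneg r hS hy) (deltaSet_singleton_nonneg r' hS' hy')
  · linarith [one_le_deltaSet_singleton hxy hS hx, neg_one_le_deltaSet_singleton r' hS']

end Pair

namespace PrefInstance

@[simp]
theorem mem_rowSet {α β : Type*} [Fintype β] [DecidableEq α] [DecidableEq β]
    {M : Finset (α × β)} {a : α} {b : β} : b ∈ rowSet M a ↔ (a, b) ∈ M := by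
  simp [rowSet]

@[simp]
theorem mem_colSet {α β : Type*} [Fintype α] [DecidableEq α] [DecidableEq β]
    {M : Finset (α × β)} {a : α} {b : β} : a ∈ colSet M b ↔ (a, b) ∈ M := by
  simp [colSet]

variable {α β : Type*} [Fintype α] [Fintype β] [DecidableEq α] [DecidableEq β]

theorem card_eq_sum_card_rowSet (M : Finset (α × β)) : M.card = ∑ a, (rowSet M a).card := by
  rw [← Finset.card_sigma]
  exact Finset.card_equiv (Equiv.sigmaEquivProd α β).symm (by simp)

variable {I : PrefInstance α β} {M : Finset (α × β)}

theorem IsMatching.card_le_sum_capA (hM : I.IsMatching M) : M.card ≤ ∑ a, I.capA a :=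
  card_eq_sum_card_rowSet M ▸ Finset.sum_le_sum fun a _ => hM.2.1 a

theorem IsMatching.eq_of_capA_le_one (hM : I.IsMatching M) {a : α} (ha : I.capA a ≤ 1)
    {b b' : β} (hb : (a, b) ∈ M) (hb' : (a, b') ∈ M) : b = b' :=
  Finset.card_le_one.mp ((hM.2.1 a).trans ha) b (mem_rowSet.mpr hb) b' (mem_rowSet.mpr hb')

theorem IsMatching.eq_of_capB_le_one (hM : I.IsMatching M) {b : β} (hb : I.capB b ≤ 1)
    {a a' : α} (ha : (a, b) ∈ M) (ha' : (a', b) ∈ M) : a = a' :=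
  Finset.card_le_one.mp ((hM.2.2 b).trans hb) a (mem_colSet.mpr ha) a' (mem_colSet.mpr ha')

theorem Delta_eq_of_singletons {f : α → β} {g : β → α} (hf : ∀ a, rowSet M a = {f a})
    (hg : ∀ b, colSet M b = {g b}) (T : Finset (α × β)) :
    I.Delta M T = ∑ a, deltaSet (I.rankA a) {f a} (rowSet T a) +
      ∑ b, deltaSet (I.rankB b) {g b} (colSet T b) := by
  simp only [Delta, DeltaA, DeltaB, hf, hg]

end PrefInstance

section RuralInstance

open PrefInstance

theorem subset_pair_of_ne {x y : Fin 2} (hxy : x ≠ y) (S : Finset (Fin 2)) : S ⊆ {x, y} :=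
  fun z _ => by rw [Finset.mem_insert, Finset.mem_singleton]; omega

theorem ruralInstance_Delta_diagonal (T : Finset (Fin 2 × Fin 2)) :
    ruralInstance.Delta {(0, 0), (1, 1)} T =
      deltaSet Fin.val {0} (rowSet T 0) + deltaSet Fin.val {1} (rowSet T 1) +
        (deltaSet Fin.val {0} (colSet T 0) + deltaSet Fin.val {1} (colSet T 1)) := by
  rw [Delta_eq_of_singletons (f := id) (g := id) (by decide) (by decide),
    Fin.sum_univ_two, Fin.sum_univ_two]
  rfl

theorem ruralInstance_Delta_antidiagonal (T : Finset (Fin 2 × Fin 2)) :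
    ruralInstance.Delta {(0, 1), (1, 0)} T =
      deltaSet Fin.val {1} (rowSet T 0) + deltaSet Fin.val {0} (rowSet T 1) +
        (deltaSet Fin.val {1} (colSet T 0) + deltaSet Fin.val {0} (colSet T 1)) := by
  rw [Delta_eq_of_singletons (f := Fin.rev) (g := Fin.rev) (by decide) (by decide),
    Fin.sum_univ_two, Fin.sum_univ_two]
  rfl

theorem ruralInstance_popular_diagonal : ruralInstance.Popular {(0, 0), (1, 1)} := by
  refine ⟨by unfold IsMatching; decide, fun T hT => ?_⟩
  have h01 : ∀ S : Finset (Fin 2), S ⊆ {0, 1} := subset_pair_of_ne zero_ne_one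
  have h10 : ∀ S : Finset (Fin 2), S ⊆ {1, 0} := subset_pair_of_ne one_ne_zero
  have r_cap : (0, 0) ∈ T → (0, 1) ∉ T := fun h h' =>
    zero_ne_one (hT.eq_of_capA_le_one le_rfl h h')
  have h_cap : (0, 0) ∈ T → (1, 0) ∉ T := fun h h' =>
    zero_ne_one (hT.eq_of_capB_le_one le_rfl h h')
  have r_add_h'_nonneg :
      0 ≤ deltaSet Fin.val {0} (rowSet T 0) + deltaSet Fin.val {1} (colSet T 1) :=
    deltaSet_singleton_add_nonneg zero_lt_one _ (h01 _) (h10 _) (by simpa using r_cap)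
  have h_add_r'_nonneg :
      0 ≤ deltaSet Fin.val {0} (colSet T 0) + deltaSet Fin.val {1} (rowSet T 1) :=
    deltaSet_singleton_add_nonneg zero_lt_one _ (h01 _) (h10 _) (by simpa using h_cap)
  rw [ruralInstance_Delta_diagonal]
  linarith

theorem ruralInstance_popular_antidiagonal : ruralInstance.Popular {(0, 1), (1, 0)} := by
  refine ⟨by unfold IsMatching; decide, fun T hT => ?_⟩
  have h01 : ∀ S : Finset (Fin 2), S ⊆ {0, 1} := subset_pair_of_ne zero_ne_one
  have h10 : ∀ S : Finset (Fin 2), S ⊆ {1, 0} := subset_pair_of_ne one_ne_zero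
  rw [ruralInstance_Delta_antidiagonal]
  by_cases hrh : (0, 0) ∈ T
  · have r'_not_h : (1, 0) ∉ T := fun h => zero_ne_one (hT.eq_of_capB_le_one le_rfl hrh h)
    have r_not_h' : (0, 1) ∉ T := fun h => zero_ne_one (hT.eq_of_capA_le_one le_rfl hrh h)
    have r_ge : -1 ≤ deltaSet Fin.val {1} (rowSet T 0) :=
      neg_one_le_deltaSet_singleton _ (h10 _)
    have h_ge : -1 ≤ deltaSet Fin.val {1} (colSet T 0) :=
      neg_one_le_deltaSet_singleton _ (h10 _)
    have r'_ge : 1 ≤ deltaSet Fin.val {0} (rowSet T 1) :=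
      one_le_deltaSet_singleton zero_lt_one (h01 _) (by simpa using r'_not_h)
    have h'_ge : 1 ≤ deltaSet Fin.val {0} (colSet T 1) :=
      one_le_deltaSet_singleton zero_lt_one (h01 _) (by simpa using r_not_h')
    linarith
  · have r_nonneg : 0 ≤ deltaSet Fin.val {1} (rowSet T 0) :=
      deltaSet_singleton_nonneg _ (h10 _) (by simpa using hrh)
    have h_nonneg : 0 ≤ deltaSet Fin.val {1} (colSet T 0) :=
      deltaSet_singleton_nonneg _ (h10 _) (by simpa using hrh)
    have r'_cap : (1, 0) ∈ T → (1, 1) ∉ T := fun h h' =>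
      zero_ne_one (hT.eq_of_capA_le_one le_rfl h h')
    have r'_add_h'_nonneg :
        0 ≤ deltaSet Fin.val {0} (rowSet T 1) + deltaSet Fin.val {0} (colSet T 1) :=
      deltaSet_singleton_add_nonneg zero_lt_one _ (h01 _) (h01 _) (by simpa using r'_cap)
    linarith

theorem ruralInstance_card_le_two {M : Finset (Fin 2 × Fin 2)}
    (hM : ruralInstance.IsMatching M) : M.card ≤ 2 :=
  hM.card_le_sum_capA

theorem ruralInstance_blocks_antidiagonal : ruralInstance.Blocks {(0, 1), (1, 0)} 0 0 :=
  ⟨Finset.mem_univ _, by decide, .inr ⟨1, by decide, zero_lt_one⟩,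
    .inr ⟨1, by decide, zero_lt_one⟩⟩

end RuralInstance

/-- In the instance above, `M = {(r,h), (r',h')}` and
`M' = {(r,h'), (r',h)}` are both popular matchings of maximum size among popular
matchings, `h'` is not matched to full capacity in either, `M(h') ≠ M'(h')`, and `M'`
is not pairwise-stable (the edge `(r,h)` blocks `M'`). Hence the rural hospitals
theorem fails for maximum-size popular matchings. -/
theorem statement13 :
    ruralInstance.Popular {(0, 0), (1, 1)} ∧
    ruralInstance.Popular {(0, 1), (1, 0)} ∧
    (∀ P : Finset (Fin 2 × Fin 2), ruralInstance.Popular P →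
      P.card ≤ Finset.card ({(0, 0), (1, 1)} : Finset (Fin 2 × Fin 2))) ∧
    (∀ P : Finset (Fin 2 × Fin 2), ruralInstance.Popular P →
      P.card ≤ Finset.card ({(0, 1), (1, 0)} : Finset (Fin 2 × Fin 2))) ∧
    (PrefInstance.colSet ({(0, 0), (1, 1)} : Finset (Fin 2 × Fin 2)) 1).card <
      ruralInstance.capB 1 ∧
    (PrefInstance.colSet ({(0, 1), (1, 0)} : Finset (Fin 2 × Fin 2)) 1).card <
      ruralInstance.capB 1 ∧
    PrefInstance.colSet ({(0, 0), (1, 1)} : Finset (Fin 2 × Fin 2)) 1 ≠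
      PrefInstance.colSet ({(0, 1), (1, 0)} : Finset (Fin 2 × Fin 2)) 1 ∧
    ruralInstance.Blocks {(0, 1), (1, 0)} 0 0 ∧
    ¬ ruralInstance.Stable {(0, 1), (1, 0)} := by
  exact ⟨ruralInstance_popular_diagonal, ruralInstance_popular_antidiagonal,
    fun P hP => ruralInstance_card_le_two hP.1, fun P hP => ruralInstance_card_le_two hP.1,
    by decide, by decide, by decide, ruralInstance_blocks_antidiagonal,
    fun hS => hS.2 0 0 ruralInstance_blocks_antidiagonal⟩
end

section
/- Consider the one-to-one instance G' with vertices {p_1, q_1, r_1, s_1} on one side and {h_1, h_2, h'_1, h''_1} on the other (all capacities 1), edges p_1–h_1, p_1–h_2, p_1–h''_1, q_1–h_1, q_1–h_2, q_1–h'_1, r_1–h_1, r_1–h_2, s_1–h_1, s_1–h_2, and preferences p_1: h_1 ≻ h_2 ≻ h''_1; q_1: h_1 ≻ h_2 ≻ h'_1; r_1: h_1 ≻ h_2; s_1: h_1 ≻ h_2; h_1: p_1 ≻ q_1 ≻ r_1 ≻ s_1; h_2: p_1 ≻ q_1 ≻ r_1 ≻ s_1; h'_1: q_1; h''_1: p_1.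 Then neither N_1 = {(p_1,h_1), (q_1,h'_1), (r_1,h_2)} nor N_2 = {(p_1,h_2), (q_1,h'_1), (r_1,h_1)} is a popular matching in G': the matching M_1 = {(p_1,h''_1), (q_1,h_2), (r_1,h_1)} satisfies Δ(M_1,N_1) > 0 and the matching M_2 = {(p_1,h_1), (q_1,h'_1), (s_1,h_2)} satisfies Δ(M_2,N_2) > 0. -/
/-- The one-to-one instance with left vertices `{p₁, q₁, r₁, s₁} = Fin 4`
(`p₁ ↦ 0`, `q₁ ↦ 1`, `r₁ ↦ 2`, `s₁ ↦ 3`), right vertices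
`{h₁, h₂, h'₁, h''₁} = Fin 4` (`h₁ ↦ 0`, `h₂ ↦ 1`, `h'₁ ↦ 2`, `h''₁ ↦ 3`), all
capacities 1, edges `p₁–h₁, p₁–h₂, p₁–h''₁, q₁–h₁, q₁–h₂, q₁–h'₁, r₁–h₁, r₁–h₂,
s₁–h₁, s₁–h₂`, and preferences `p₁ : h₁ ≻ h₂ ≻ h''₁`, `q₁ : h₁ ≻ h₂ ≻ h'₁`,
`r₁ : h₁ ≻ h₂`, `s₁ : h₁ ≻ h₂`, `h₁ : p₁ ≻ q₁ ≻ r₁ ≻ s₁`, `h₂ : p₁ ≻ q₁ ≻ r₁ ≻ s₁`,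
`h'₁ : q₁`, `h''₁ : p₁`. -/
def cloneInstance : PrefInstance (Fin 4) (Fin 4) where
  E := {(0, 0), (0, 1), (0, 3), (1, 0), (1, 1), (1, 2), (2, 0), (2, 1), (3, 0), (3, 1)}
  capA := fun _ => 1
  capB := fun _ => 1
  rankA := fun _ b => b.val
  rankB := fun _ a => a.val
  capA_pos := fun _ => le_refl 1
  capB_pos := fun _ => le_refl 1
  rankA_injOn := fun _ => fun x _ y _ h => Fin.val_injective h
  rankB_injOn := fun _ => fun x _ y _ h => Fin.val_injective h

/-!
Reversing a pairing of two arrays reverses its votes, hence `δ_u(S₀,S₁) + δ_u(S₁,S₀) ≤ 0` and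
`Δ(M,T) + Δ(T,M) ≤ 0`: a single `T` with `Δ(T,M) > 0` shows that `M` is not popular. It therefore
suffices to compute `Δ(M₁,N₁)` and `Δ(M₂,N₂)`. As every vertex has at most one partner, `δ_u` is the
vote of `u` between its two partners:

* `q₁, r₁, h₂, h''₁` prefer `M₁` to `N₁`, while `p₁, h₁, h'₁` prefer `N₁` to `M₁`;
* `p₁, s₁, h₁` prefer `M₂` to `N₂`, while `r₁, h₂` prefer `N₂` to `M₂`.
-/

section DeltaSet

variable {β : Type*} [DecidableEq β] (r : β → ℕ)

theorem vote_self (x : Option β) : vote r x x = 0 := by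
  cases x <;> simp [vote]

-- Only an inequality: distinct elements of equal rank get the vote `-1` in both orders.
theorem vote_add_vote_swap_nonpos (x y : Option β) : vote r x y + vote r y x ≤ 0 := by
  rcases x with _ | x <;> rcases y with _ | y <;> simp only [vote] <;> grind

/-- The minimum total vote over all ways of pairing up the entries of two arrays of length `k`.
Keeping `k` a free parameter avoids rewriting the dependent length `kOf S₀ S₁` in `deltaSet`. -/
def minPairingVote {k : ℕ} (v w : Fin k → Option β) : ℤ :=
  Finset.univ.inf' ⟨1, Finset.mem_univ 1⟩ fun σ : Equiv.Perm (Fin k) =>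
    ∑ i, vote r (v i) (w (σ i))

theorem minPairingVote_add_swap_nonpos {k : ℕ} (v w : Fin k → Option β) :
    minPairingVote r v w + minPairingVote r w v ≤ 0 := by
  obtain ⟨σ, -, hσ⟩ := Finset.exists_mem_eq_inf' ⟨1, Finset.mem_univ 1⟩
    fun σ : Equiv.Perm (Fin k) => ∑ i, vote r (v i) (w (σ i))
  have minPairingVote_swap_le : minPairingVote r w v ≤ ∑ i, vote r (w (σ i)) (v i) := by
    refine (Finset.inf'_le _ (Finset.mem_univ σ.symm)).trans_eq ?_
    rw [← Equiv.sum_comp σ]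
    simp only [Equiv.symm_apply_apply]
  calc minPairingVote r v w + minPairingVote r w v
      ≤ ∑ i, vote r (v i) (w (σ i)) + ∑ i, vote r (w (σ i)) (v i) :=
        add_le_add hσ.le minPairingVote_swap_le
    _ = ∑ i, (vote r (v i) (w (σ i)) + vote r (w (σ i)) (v i)) := Finset.sum_add_distrib.symm
    _ ≤ 0 := Finset.sum_nonpos fun _ _ => vote_add_vote_swap_nonpos r _ _

theorem kOf_comm (S₀ S₁ : Finset β) : kOf S₀ S₁ = kOf S₁ S₀ := by
  rw [kOf, kOf, max_comm, Finset.inter_comm]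

theorem deltaSet_eq_minPairingVote {S₀ S₁ : Finset β} {k : ℕ} (hk : kOf S₀ S₁ = k) :
    deltaSet r S₀ S₁ = minPairingVote r (fun i : Fin k => (padded S₀ S₁ k).getD i none)
      (fun i : Fin k => (padded S₁ S₀ k).getD i none) := by
  subst hk
  rfl

theorem deltaSet_add_swap_nonpos (S₀ S₁ : Finset β) :
    deltaSet r S₀ S₁ + deltaSet r S₁ S₀ ≤ 0 := by
  rw [deltaSet_eq_minPairingVote r rfl, deltaSet_eq_minPairingVote r (kOf_comm S₁ S₀)]
  exact minPairingVote_add_swap_nonpos r _ _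

theorem deltaSet_self (S : Finset β) : deltaSet r S S = 0 := by
  have kOf_self : kOf S S = 0 := by simp [kOf]
  rw [deltaSet_eq_minPairingVote r kOf_self]
  simp [minPairingVote]

theorem kOf_toFinset_of_ne {x y : Option β} (hxy : x ≠ y) : kOf x.toFinset y.toFinset = 1 := by
  rcases x with _ | x <;> rcases y with _ | y <;> simp_all [kOf]

theorem padded_toFinset_of_ne {x y : Option β} (hxy : x ≠ y) :
    padded x.toFinset y.toFinset 1 = [x] := by
  rcases x with _ | x
  · simp [padded]
  · have sdiff_eq : (some x).toFinset \ y.toFinset = {x} := by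
      ext z
      simp only [Finset.mem_sdiff, Option.mem_toFinset, Option.mem_def, Finset.mem_singleton]
      grind
    rw [padded, sdiff_eq]
    simp

theorem deltaSet_toFinset (x y : Option β) : deltaSet r x.toFinset y.toFinset = vote r x y := by
  rcases eq_or_ne x y with rfl | hxy
  · rw [deltaSet_self, vote_self]
  · rw [deltaSet_eq_minPairingVote r (kOf_toFinset_of_ne hxy), padded_toFinset_of_ne hxy,
      padded_toFinset_of_ne hxy.symm]
    simp [minPairingVote]

end DeltaSet

namespace PrefInstance

variable {α β : Type*} [Fintype α] [Fintype β] [DecidableEq α] [DecidableEq β]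

theorem delta_add_swap_nonpos (I : PrefInstance α β) (M T : Finset (α × β)) :
    I.Delta M T + I.Delta T M ≤ 0 := by
  have sum_deltaA_nonpos : ∑ a, (I.DeltaA M T a + I.DeltaA T M a) ≤ 0 :=
    Finset.sum_nonpos fun _ _ => deltaSet_add_swap_nonpos _ _ _
  have sum_deltaB_nonpos : ∑ b, (I.DeltaB M T b + I.DeltaB T M b) ≤ 0 :=
    Finset.sum_nonpos fun _ _ => deltaSet_add_swap_nonpos _ _ _
  rw [Finset.sum_add_distrib] at sum_deltaA_nonpos sum_deltaB_nonpos
  unfold Delta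
  linarith

theorem Popular.weaklyPopular {I : PrefInstance α β} {M : Finset (α × β)} (hM : I.Popular M) :
    I.WeaklyPopular M :=
  ⟨hM.1, fun T hT => by linarith [hM.2 T hT, I.delta_add_swap_nonpos M T]⟩

theorem not_popular_of_delta_pos {I : PrefInstance α β} {M T : Finset (α × β)}
    (hT : I.IsMatching T) (hpos : 0 < I.Delta T M) : ¬ I.Popular M :=
  fun hM => hpos.not_ge (hM.weaklyPopular.2 T hT)

/-- The functions `f` and `g` send each vertex of `A`, respectively `B`, to its unique partner in
`M`, or to `none` if it is unmatched. They turn a one-to-one matching into data on which votes can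
be evaluated. -/
structure HasPartners (M : Finset (α × β)) (f : α → Option β) (g : β → Option α) : Prop where
  rowSet_eq : ∀ a, rowSet M a = (f a).toFinset
  colSet_eq : ∀ b, colSet M b = (g b).toFinset

theorem HasPartners.delta_eq_sum_vote {M₀ M₁ : Finset (α × β)} {f₀ f₁ : α → Option β}
    {g₀ g₁ : β → Option α} (h₀ : HasPartners M₀ f₀ g₀) (h₁ : HasPartners M₁ f₁ g₁)
    (I : PrefInstance α β) :
    I.Delta M₀ M₁ =
      ∑ a, vote (I.rankA a) (f₀ a) (f₁ a) + ∑ b, vote (I.rankB b) (g₀ b) (g₁ b) := by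
  simp only [Delta, DeltaA, DeltaB, h₀.rowSet_eq, h₀.colSet_eq, h₁.rowSet_eq, h₁.colSet_eq,
    deltaSet_toFinset]

end PrefInstance

namespace cloneInstance

open PrefInstance

/-- The matching `N₁ = {(p₁,h₁), (q₁,h'₁), (r₁,h₂)}`, shown not to be popular. -/
def N₁ : Finset (Fin 4 × Fin 4) := {(0, 0), (1, 2), (2, 1)}

/-- The matching `N₂ = {(p₁,h₂), (q₁,h'₁), (r₁,h₁)}`, shown not to be popular. -/
def N₂ : Finset (Fin 4 × Fin 4) := {(0, 1), (1, 2), (2, 0)}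

/-- The matching `M₁ = {(p₁,h''₁), (q₁,h₂), (r₁,h₁)}`, which defeats `N₁`. -/
def M₁ : Finset (Fin 4 × Fin 4) := {(0, 3), (1, 1), (2, 0)}

/-- The matching `M₂ = {(p₁,h₁), (q₁,h'₁), (s₁,h₂)}`, which defeats `N₂`. -/
def M₂ : Finset (Fin 4 × Fin 4) := {(0, 0), (1, 2), (3, 1)}

theorem isMatching_N₁ : cloneInstance.IsMatching N₁ := ⟨by decide, by decide, by decide⟩

theorem isMatching_N₂ : cloneInstance.IsMatching N₂ := ⟨by decide, by decide, by decide⟩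

theorem isMatching_M₁ : cloneInstance.IsMatching M₁ := ⟨by decide, by decide, by decide⟩

theorem isMatching_M₂ : cloneInstance.IsMatching M₂ := ⟨by decide, by decide, by decide⟩

theorem hasPartners_N₁ :
    HasPartners N₁ ![some 0, some 2, some 1, none] ![some 0, some 2, some 1, none] :=
  ⟨by decide, by decide⟩

theorem hasPartners_N₂ :
    HasPartners N₂ ![some 1, some 2, some 0, none] ![some 2, some 0, some 1, none] :=
  ⟨by decide, by decide⟩

theorem hasPartners_M₁ :
    HasPartners M₁ ![some 3, some 1, some 0, none] ![some 2, some 1, none, some 0] :=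
  ⟨by decide, by decide⟩

theorem hasPartners_M₂ :
    HasPartners M₂ ![some 0, some 2, none, some 1] ![some 0, some 3, some 1, none] :=
  ⟨by decide, by decide⟩

-- The votes below and in `delta_M₂_N₂` are those of `p₁, q₁, r₁, s₁` and `h₁, h₂, h'₁, h''₁`.
theorem delta_M₁_N₁ : cloneInstance.Delta M₁ N₁ = 1 := by
  rw [hasPartners_M₁.delta_eq_sum_vote hasPartners_N₁, Fin.sum_univ_four, Fin.sum_univ_four]
  change ((-1 + 1 + 1 + 0) + (-1 + 1 + -1 + 1) : ℤ) = 1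
  norm_num

theorem delta_M₂_N₂ : cloneInstance.Delta M₂ N₂ = 1 := by
  rw [hasPartners_M₂.delta_eq_sum_vote hasPartners_N₂, Fin.sum_univ_four, Fin.sum_univ_four]
  change ((1 + 0 + -1 + 1) + (1 + -1 + 0 + 0) : ℤ) = 1
  norm_num

end cloneInstance

/-- In the one-to-one instance above, neither
`N₁ = {(p₁,h₁), (q₁,h'₁), (r₁,h₂)}` nor `N₂ = {(p₁,h₂), (q₁,h'₁), (r₁,h₁)}` is a
popular matching: `M₁ = {(p₁,h''₁), (q₁,h₂), (r₁,h₁)}` satisfies `Δ(M₁,N₁) > 0` and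
`M₂ = {(p₁,h₁), (q₁,h'₁), (s₁,h₂)}` satisfies `Δ(M₂,N₂) > 0`. -/
theorem statement17 :
    cloneInstance.IsMatching {(0, 0), (1, 2), (2, 1)} ∧
    cloneInstance.IsMatching {(0, 1), (1, 2), (2, 0)} ∧
    0 < cloneInstance.Delta {(0, 3), (1, 1), (2, 0)} {(0, 0), (1, 2), (2, 1)} ∧
    0 < cloneInstance.Delta {(0, 0), (1, 2), (3, 1)} {(0, 1), (1, 2), (2, 0)} ∧
    ¬ cloneInstance.Popular {(0, 0), (1, 2), (2, 1)} ∧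
    ¬ cloneInstance.Popular {(0, 1), (1, 2), (2, 0)} := by
  have delta_pos₁ : 0 < cloneInstance.Delta cloneInstance.M₁ cloneInstance.N₁ :=
    cloneInstance.delta_M₁_N₁ ▸ one_pos
  have delta_pos₂ : 0 < cloneInstance.Delta cloneInstance.M₂ cloneInstance.N₂ :=
    cloneInstance.delta_M₂_N₂ ▸ one_pos
  exact ⟨cloneInstance.isMatching_N₁, cloneInstance.isMatching_N₂, delta_pos₁, delta_pos₂,
    PrefInstance.not_popular_of_delta_pos cloneInstance.isMatching_M₁ delta_pos₁,
    PrefInstance.not_popular_of_delta_pos cloneInstance.isMatching_M₂ delta_pos₂⟩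
end
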